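/- Semi-discrete wave equation for the vector potential (equation 3.26, component form): Let ε₀, μ₀ ∈ ℝ with ε₀ ≠ 0 and μ₀ ≠ 0, and let A¹,A²,A³, Φ : ℝ → ℤ³ → ℝ be twice differentiable in t at every lattice point, and let H¹,H²,H³, B¹²,B¹³,B²³, D¹²,D¹³,D²³, J¹²,J¹³,J²³ : ℝ → ℤ³ → ℝ with the D-components differentiable in t. Define Eⁱ(t,p) = −(ΔᵢΦ)(t,p) − ∂ₜAⁱ(t,p) for i = 1,2,3. Assume for all t and (k,s,m): (B = dᶜA) B¹² = Δ₁A² − Δ₂A¹, B¹³ = Δ₁A³ − Δ₃A¹, B²³ = Δ₂A³ − Δ₃A²; (Ampère) Δ₁H² − Δ₂H¹ = ∂ₜD¹² + J¹², Δ₁H³ − Δ₃H¹ = ∂ₜD¹³ + J¹³, Δ₂H³ − Δ₃H² = ∂ₜD²³ + J²³; (D = ε₀∗E) D¹²(t,k,s,m) = ε₀E³(t,k,s,m−1), D¹³(t,k,s,m) = −ε₀E²(t,k,s−1,m), D²³(t,k,s,m) = ε₀E¹(t,k−1,s,m); (∗B = μ₀H) B¹²(t,k−1,s−1,m) = μ₀H³(t,k,s,m),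 B¹³(t,k−1,s,m−1) = −μ₀H²(t,k,s,m), B²³(t,k,s−1,m−1) = μ₀H¹(t,k,s,m); (Lorentz gauge) (Δ₁A¹)(t,k−1,s,m) + (Δ₂A²)(t,k,s−1,m) + (Δ₃A³)(t,k,s,m−1) + μ₀ε₀·∂ₜΦ(t,k,s,m) = 0. Then for all t and (k,s,m): −(Δ₁²A¹)(k−1,s,m) − (Δ₂²A¹)(k,s−1,m) − (Δ₃²A¹)(k,s,m−1) + μ₀ε₀·∂ₜ²A¹(k,s,m) = μ₀J²³(k+1,s,m); −(Δ₁²A²)(k−1,s,m) − (Δ₂²A²)(k,s−1,m) − (Δ₃²A²)(k,s,m−1) + μ₀ε₀·∂ₜ²A²(k,s,m) = −μ₀J¹³(k,s+1,m); −(Δ₁²A³)(k−1,s,m) − (Δ₂²A³)(k,s−1,m) − (Δ₃²A³)(k,s,m−1) + μ₀ε₀·∂ₜ²A³(k,s,m) = μ₀J¹²(k,s,m+1), where Δᵢ² = Δᵢ∘Δᵢ and all components are evaluated at time t. -/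

import Mathlib

/-- Forward difference in the first variable on `ℤ³`. -/
def d1 (f : ℤ → ℤ → ℤ → ℝ) (k s m : ℤ) : ℝ := f (k + 1) s m - f k s m

/-- Forward difference in the second variable on `ℤ³`. -/
def d2 (f : ℤ → ℤ → ℤ → ℝ) (k s m : ℤ) : ℝ := f k (s + 1) m - f k s m

/-- Forward difference in the third variable on `ℤ³`. -/
def d3 (f : ℤ → ℤ → ℤ → ℝ) (k s m : ℤ) : ℝ := f k s (m + 1) - f k s m

/-!
For vector fields on a lattice, the backward curl of the forward curl is the forward gradient of
the backward divergence minus the Laplacian. Ampère's law, shifted by one lattice step, expresses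
the backward curl of `B = curl A` through `∂ₜE = -grad ∂ₜΦ - ∂ₜ²A` and `J`; the Lorentz gauge makes
the two gradient terms cancel, leaving the wave equation.

A 2-form `F` is treated as the vector field `(F²³, -F¹³, F¹²)`, which turns the star operators into
lattice shifts.
-/

open scoped fwdDiff

section LatticeCalculus

variable {L V : Type*} [AddCommGroup L] [AddCommGroup V]

/-- The backward difference in direction `h`, the counterpart of Mathlib's `fwdDiff`. -/
def bwdDiff (h : L) (f : L → V) : L → V := fun x ↦ f x - f (x - h)

lemma bwdDiff_apply_eq_fwdDiff (h : L) (f : L → V) (x : L) :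
    bwdDiff h f x = Δ_[h] f (x - h) := by
  simp only [bwdDiff, fwdDiff, sub_add_cancel]

lemma bwdDiff_sub (h : L) (f g : L → V) : bwdDiff h (f - g) = bwdDiff h f - bwdDiff h g :=
  funext fun _ ↦ sub_sub_sub_comm ..

lemma bwdDiff_fwdDiff_comm (h₁ h₂ : L) (f : L → V) :
    bwdDiff h₁ (Δ_[h₂] f) = Δ_[h₂] (bwdDiff h₁ f) := by
  ext x
  simp only [bwdDiff, fwdDiff, sub_add_eq_add_sub]
  exact sub_sub_sub_comm ..

section Divergence

variable {ι : Type*} [Fintype ι]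

/-- The divergence of a lattice vector field with respect to the directions `e`. It uses backward
differences, which makes it minus the formal adjoint of the forward gradient. -/
def latticeDiv (e : ι → L) (A : ι → L → V) : L → V := ∑ j, bwdDiff (e j) (A j)

/-- The lattice Laplacian with respect to the directions `e`, i.e. the divergence of the forward
gradient. -/
def latticeLaplacian (e : ι → L) (f : L → V) : L → V := latticeDiv e fun j ↦ Δ_[e j] f

end Divergence

/-- The forward curl of a lattice vector field. Indices in `Fin 3` are cyclic, so that
`(i, i + 1, i + 2)` is always a positively oriented triple. -/
def fwdCurl (e : Fin 3 → L) (A : Fin 3 → L → V) (i : Fin 3) : L → V :=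
  Δ_[e (i + 1)] (A (i + 2)) - Δ_[e (i + 2)] (A (i + 1))

/-- The backward curl of a lattice vector field, with the index convention of `fwdCurl`. -/
def bwdCurl (e : Fin 3 → L) (A : Fin 3 → L → V) (i : Fin 3) : L → V :=
  bwdDiff (e (i + 1)) (A (i + 2)) - bwdDiff (e (i + 2)) (A (i + 1))

lemma fin_three_add_add (i : Fin 3) :
    i + 1 + 1 = i + 2 ∧ i + 1 + 2 = i ∧ i + 2 + 1 = i ∧ i + 2 + 2 = i + 1 := by
  decide +revert

lemma sum_fin_three_cyclic {M : Type*} [AddCommMonoid M] (f : Fin 3 → M) (i : Fin 3) :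
    ∑ j, f j = f i + f (i + 1) + f (i + 2) := by
  rw [← Equiv.sum_comp (Equiv.addLeft i), Fin.sum_univ_three]
  simp only [Equiv.coe_addLeft, add_zero]

theorem bwdCurl_fwdCurl (e : Fin 3 → L) (A : Fin 3 → L → V) (i : Fin 3) :
    bwdCurl e (fwdCurl e A) i = Δ_[e i] (latticeDiv e A) - latticeLaplacian e (A i) := by
  simp only [bwdCurl, fwdCurl, latticeLaplacian, latticeDiv, sum_fin_three_cyclic _ i,
    fin_three_add_add, bwdDiff_sub, bwdDiff_fwdDiff_comm, fwdDiff_add]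
  abel

lemma smul_fwdCurl_eq_bwdCurl {R : Type*} [Monoid R] [DistribMulAction R V] {e : Fin 3 → L}
    {B H : Fin 3 → L → V} {μ : R} (hBH : ∀ i x, B i (x - e (i + 1) - e (i + 2)) = μ • H i x)
    (i : Fin 3) (x : L) :
    μ • fwdCurl e H i (x + e i) = bwdCurl e B i x := by
  have hBH₁ := hBH (i + 1)
  have hBH₂ := hBH (i + 2)
  simp only [fin_three_add_add] at hBH₁ hBH₂
  simp only [fwdCurl, bwdCurl, fwdDiff, bwdDiff, Pi.sub_apply, smul_sub, ← hBH₁, ← hBH₂]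
  congr 3 <;> abel

/-- All functions are taken at a fixed time: `Φ'`, `A''`, `E'` stand for `∂ₜΦ`, `∂ₜ²A`, `∂ₜE`. -/
theorem wave_equation_of_ampere {R : Type*} [CommRing R] [Module R V] {e : Fin 3 → L} {μ ε : R}
    {A A'' E' H J : Fin 3 → L → V} {Φ' : L → V}
    (hH : ∀ i x, fwdCurl e A i (x - e (i + 1) - e (i + 2)) = μ • H i x)
    (hAmp : ∀ i x, fwdCurl e H i x = ε • E' i (x - e i) + J i x)
    (hE' : ∀ i, E' i = -Δ_[e i] Φ' - A'' i)
    (hGauge : latticeDiv e A + (μ * ε) • Φ' = 0) (i : Fin 3) (x : L) :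
    -latticeLaplacian e (A i) x + (μ * ε) • A'' i x = μ • J i (x + e i) := by
  have hgrad : Δ_[e i] (latticeDiv e A) = -((μ * ε) • Δ_[e i] Φ') := by
    rw [eq_neg_of_add_eq_zero_left hGauge, ← neg_smul, fwdDiff_const_smul, neg_smul]
  have hcurl := smul_fwdCurl_eq_bwdCurl hH i x
  rw [bwdCurl_fwdCurl, hgrad, hAmp, add_sub_cancel_right, hE'] at hcurl
  simp only [Pi.sub_apply, Pi.neg_apply, Pi.smul_apply] at hcurl
  linear_combination (norm := module) -hcurl

end LatticeCalculus

lemma deriv_neg_sub_sub {𝕜 V : Type*} [NontriviallyNormedField 𝕜] [NormedAddCommGroup V]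
    [NormedSpace 𝕜 V] {f g a : 𝕜 → V} {t : 𝕜} (hf : DifferentiableAt 𝕜 f t)
    (hg : DifferentiableAt 𝕜 g t) (ha : DifferentiableAt 𝕜 a t) :
    deriv (fun u ↦ -(f u - g u) - a u) t = -(deriv f t - deriv g t) - deriv a t :=
  ((hf.hasDerivAt.sub hg.hasDerivAt).neg.sub ha.hasDerivAt).deriv

/-- The standard directions of `ℤ³`. -/
def stdDir : Fin 3 → ℤ × ℤ × ℤ := ![(1, 0, 0), (0, 1, 0), (0, 0, 1)]

/-- The function on `ℤ × ℤ × ℤ` with the given curried form. -/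
def onLattice (f : ℤ → ℤ → ℤ → ℝ) : ℤ × ℤ × ℤ → ℝ := fun p ↦ f p.1 p.2.1 p.2.2

lemma fwdDiff_stdDir_zero (f : ℤ → ℤ → ℤ → ℝ) :
    Δ_[stdDir 0] (onLattice f) = onLattice (d1 f) := by
  ext; simp [fwdDiff, onLattice, stdDir, d1]

lemma fwdDiff_stdDir_one (f : ℤ → ℤ → ℤ → ℝ) :
    Δ_[stdDir 1] (onLattice f) = onLattice (d2 f) := by
  ext; simp [fwdDiff, onLattice, stdDir, d2]

lemma fwdDiff_stdDir_two (f : ℤ → ℤ → ℤ → ℝ) :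
    Δ_[stdDir 2] (onLattice f) = onLattice (d3 f) := by
  ext; simp [fwdDiff, onLattice, stdDir, d3]

lemma latticeDiv_stdDir (F : Fin 3 → ℤ → ℤ → ℤ → ℝ) (k s m : ℤ) :
    latticeDiv stdDir (fun i ↦ onLattice (F i)) (k, s, m)
      = d1 (F 0) (k - 1) s m + d2 (F 1) k (s - 1) m + d3 (F 2) k s (m - 1) := by
  simp only [latticeDiv, Fin.sum_univ_three, Pi.add_apply, bwdDiff_apply_eq_fwdDiff,
    fwdDiff_stdDir_zero, fwdDiff_stdDir_one, fwdDiff_stdDir_two]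
  simp [onLattice, stdDir]

lemma latticeLaplacian_stdDir (f : ℤ → ℤ → ℤ → ℝ) (k s m : ℤ) :
    latticeLaplacian stdDir (onLattice f) (k, s, m)
      = d1 (d1 f) (k - 1) s m + d2 (d2 f) k (s - 1) m + d3 (d3 f) k s (m - 1) := by
  have hgrad : (fun j ↦ Δ_[stdDir j] (onLattice f))
      = fun j ↦ onLattice (![d1 f, d2 f, d3 f] j) := by
    ext j : 1
    fin_cases j
    exacts [fwdDiff_stdDir_zero f, fwdDiff_stdDir_one f, fwdDiff_stdDir_two f]
  rw [latticeLaplacian, hgrad, latticeDiv_stdDir]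
  rfl

lemma fwdCurl_stdDir (F : Fin 3 → ℤ → ℤ → ℤ → ℝ) (i : Fin 3) :
    fwdCurl stdDir (fun i ↦ onLattice (F i)) i = onLattice
      (![d2 (F 2) - d3 (F 1), d3 (F 0) - d1 (F 2), d1 (F 1) - d2 (F 0)] i) := by
  fin_cases i
  · exact congrArg₂ (· - ·) (fwdDiff_stdDir_one _) (fwdDiff_stdDir_two _)
  · exact congrArg₂ (· - ·) (fwdDiff_stdDir_two _) (fwdDiff_stdDir_zero _)
  · exact congrArg₂ (· - ·) (fwdDiff_stdDir_zero _) (fwdDiff_stdDir_one _)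

theorem wave_equation_stdDir_of_ampere {μ ε : ℝ}
    {A₁ A₂ A₃ A₁'' A₂'' A₃'' E₁' E₂' E₃' H₁ H₂ H₃ J₁₂ J₁₃ J₂₃ Φ' : ℤ → ℤ → ℤ → ℝ}
    (hH₃ : ∀ k s m, d1 A₂ (k - 1) (s - 1) m - d2 A₁ (k - 1) (s - 1) m = μ * H₃ k s m)
    (hH₂ : ∀ k s m, d1 A₃ (k - 1) s (m - 1) - d3 A₁ (k - 1) s (m - 1) = -(μ * H₂ k s m))
    (hH₁ : ∀ k s m, d2 A₃ k (s - 1) (m - 1) - d3 A₂ k (s - 1) (m - 1) = μ * H₁ k s m)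
    (hAmp₁₂ : ∀ k s m, d1 H₂ k s m - d2 H₁ k s m = ε * E₃' k s (m - 1) + J₁₂ k s m)
    (hAmp₁₃ : ∀ k s m, d1 H₃ k s m - d3 H₁ k s m = -(ε * E₂' k (s - 1) m) + J₁₃ k s m)
    (hAmp₂₃ : ∀ k s m, d2 H₃ k s m - d3 H₂ k s m = ε * E₁' (k - 1) s m + J₂₃ k s m)
    (hE₁' : ∀ k s m, E₁' k s m = -d1 Φ' k s m - A₁'' k s m)
    (hE₂' : ∀ k s m, E₂' k s m = -d2 Φ' k s m - A₂'' k s m)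
    (hE₃' : ∀ k s m, E₃' k s m = -d3 Φ' k s m - A₃'' k s m)
    (hGauge : ∀ k s m, d1 A₁ (k - 1) s m + d2 A₂ k (s - 1) m + d3 A₃ k s (m - 1)
      + μ * ε * Φ' k s m = 0) (k s m : ℤ) :
    (-d1 (d1 A₁) (k - 1) s m - d2 (d2 A₁) k (s - 1) m - d3 (d3 A₁) k s (m - 1)
        + μ * ε * A₁'' k s m = μ * J₂₃ (k + 1) s m) ∧
    (-d1 (d1 A₂) (k - 1) s m - d2 (d2 A₂) k (s - 1) m - d3 (d3 A₂) k s (m - 1)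
        + μ * ε * A₂'' k s m = -(μ * J₁₃ k (s + 1) m)) ∧
    (-d1 (d1 A₃) (k - 1) s m - d2 (d2 A₃) k (s - 1) m - d3 (d3 A₃) k s (m - 1)
        + μ * ε * A₃'' k s m = μ * J₁₂ k s (m + 1)) := by
  have hwave := wave_equation_of_ampere (e := stdDir) (μ := μ) (ε := ε)
    (A := fun i ↦ onLattice (![A₁, A₂, A₃] i)) (A'' := fun i ↦ onLattice (![A₁'', A₂'', A₃''] i))
    (E' := fun i ↦ onLattice (![E₁', E₂', E₃'] i)) (H := fun i ↦ onLattice (![H₁, H₂, H₃] i))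
    (J := fun i ↦ onLattice (![J₂₃, -J₁₃, J₁₂] i)) (Φ' := onLattice Φ') ?_ ?_ ?_ ?_
  · have hcoord i := hwave i (k, s, m)
    simp only [latticeLaplacian_stdDir, neg_add'] at hcoord
    refine ⟨?_, ?_, ?_⟩
    · simpa [onLattice, stdDir] using hcoord 0
    · simpa [onLattice, stdDir] using hcoord 1
    · simpa [onLattice, stdDir] using hcoord 2
  · rintro i ⟨k, s, m⟩
    rw [fwdCurl_stdDir]
    fin_cases i
    · simpa [onLattice, stdDir] using hH₁ k s m
    · simpa [onLattice, stdDir] using congrArg Neg.neg (hH₂ k s m)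
    · simpa [onLattice, stdDir] using hH₃ k s m
  · rintro i ⟨k, s, m⟩
    rw [fwdCurl_stdDir]
    fin_cases i
    · simpa [onLattice, stdDir] using hAmp₂₃ k s m
    · simpa [onLattice, stdDir, add_comm] using congrArg Neg.neg (hAmp₁₃ k s m)
    · simpa [onLattice, stdDir] using hAmp₁₂ k s m
  · intro i
    ext ⟨k, s, m⟩
    fin_cases i
    · simpa [fwdDiff_stdDir_zero, onLattice] using hE₁' k s m
    · simpa [fwdDiff_stdDir_one, onLattice] using hE₂' k s m
    · simpa [fwdDiff_stdDir_two, onLattice] using hE₃' k s m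
  · ext ⟨k, s, m⟩
    rw [Pi.add_apply, latticeDiv_stdDir]
    exact hGauge k s m

/-- Semi-discrete wave equation for the discrete magnetic vector potential
(equation 3.26), in component form. -/
theorem stmt11 (ε₀ μ₀ : ℝ) (hε₀ : ε₀ ≠ 0) (hμ₀ : μ₀ ≠ 0)
    (A1 A2 A3 Φ : ℝ → ℤ → ℤ → ℤ → ℝ)
    (H1 H2 H3 B12 B13 B23 D12 D13 D23 J12 J13 J23 : ℝ → ℤ → ℤ → ℤ → ℝ)
    -- A and Φ are twice differentiable in t
    (hA1 : ∀ k s m : ℤ, Differentiable ℝ fun t => A1 t k s m)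
    (hA1' : ∀ k s m : ℤ, Differentiable ℝ (deriv fun t => A1 t k s m))
    (hA2 : ∀ k s m : ℤ, Differentiable ℝ fun t => A2 t k s m)
    (hA2' : ∀ k s m : ℤ, Differentiable ℝ (deriv fun t => A2 t k s m))
    (hA3 : ∀ k s m : ℤ, Differentiable ℝ fun t => A3 t k s m)
    (hA3' : ∀ k s m : ℤ, Differentiable ℝ (deriv fun t => A3 t k s m))
    (hΦ : ∀ k s m : ℤ, Differentiable ℝ fun t => Φ t k s m)
    (hΦ' : ∀ k s m : ℤ, Differentiable ℝ (deriv fun t => Φ t k s m))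
    -- the D-components are differentiable in t
    (hD12 : ∀ k s m : ℤ, Differentiable ℝ fun t => D12 t k s m)
    (hD13 : ∀ k s m : ℤ, Differentiable ℝ fun t => D13 t k s m)
    (hD23 : ∀ k s m : ℤ, Differentiable ℝ fun t => D23 t k s m)
    -- the electric field E = −dᶜΦ − ∂ₜA
    (E1 E2 E3 : ℝ → ℤ → ℤ → ℤ → ℝ)
    (hE1 : ∀ (t : ℝ) (k s m : ℤ),
      E1 t k s m = -d1 (Φ t) k s m - deriv (fun u => A1 u k s m) t)
    (hE2 : ∀ (t : ℝ) (k s m : ℤ),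
      E2 t k s m = -d2 (Φ t) k s m - deriv (fun u => A2 u k s m) t)
    (hE3 : ∀ (t : ℝ) (k s m : ℤ),
      E3 t k s m = -d3 (Φ t) k s m - deriv (fun u => A3 u k s m) t)
    -- B = dᶜA
    (hB12 : ∀ (t : ℝ) (k s m : ℤ),
      B12 t k s m = d1 (A2 t) k s m - d2 (A1 t) k s m)
    (hB13 : ∀ (t : ℝ) (k s m : ℤ),
      B13 t k s m = d1 (A3 t) k s m - d3 (A1 t) k s m)
    (hB23 : ∀ (t : ℝ) (k s m : ℤ),
      B23 t k s m = d2 (A3 t) k s m - d3 (A2 t) k s m)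
    -- Ampère's law
    (hAmp12 : ∀ (t : ℝ) (k s m : ℤ),
      d1 (H2 t) k s m - d2 (H1 t) k s m
        = deriv (fun u => D12 u k s m) t + J12 t k s m)
    (hAmp13 : ∀ (t : ℝ) (k s m : ℤ),
      d1 (H3 t) k s m - d3 (H1 t) k s m
        = deriv (fun u => D13 u k s m) t + J13 t k s m)
    (hAmp23 : ∀ (t : ℝ) (k s m : ℤ),
      d2 (H3 t) k s m - d3 (H2 t) k s m
        = deriv (fun u => D23 u k s m) t + J23 t k s m)
    -- constitutive relation D = ε₀ ∗E
    (hD12E : ∀ (t : ℝ) (k s m : ℤ), D12 t k s m = ε₀ * E3 t k s (m - 1))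
    (hD13E : ∀ (t : ℝ) (k s m : ℤ), D13 t k s m = -(ε₀ * E2 t k (s - 1) m))
    (hD23E : ∀ (t : ℝ) (k s m : ℤ), D23 t k s m = ε₀ * E1 t (k - 1) s m)
    -- constitutive relation ∗B = μ₀ H
    (hB12H : ∀ (t : ℝ) (k s m : ℤ), B12 t (k - 1) (s - 1) m = μ₀ * H3 t k s m)
    (hB13H : ∀ (t : ℝ) (k s m : ℤ), B13 t (k - 1) s (m - 1) = -(μ₀ * H2 t k s m))
    (hB23H : ∀ (t : ℝ) (k s m : ℤ), B23 t k (s - 1) (m - 1) = μ₀ * H1 t k s m)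
    -- Lorentz gauge condition
    (hGauge : ∀ (t : ℝ) (k s m : ℤ),
      d1 (A1 t) (k - 1) s m + d2 (A2 t) k (s - 1) m + d3 (A3 t) k s (m - 1)
        + μ₀ * ε₀ * deriv (fun u => Φ u k s m) t = 0) :
    ∀ (t : ℝ) (k s m : ℤ),
      (-d1 (d1 (A1 t)) (k - 1) s m - d2 (d2 (A1 t)) k (s - 1) m
          - d3 (d3 (A1 t)) k s (m - 1)
          + μ₀ * ε₀ * deriv (deriv fun u => A1 u k s m) t
        = μ₀ * J23 t (k + 1) s m) ∧
      (-d1 (d1 (A2 t)) (k - 1) s m - d2 (d2 (A2 t)) k (s - 1) m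
          - d3 (d3 (A2 t)) k s (m - 1)
          + μ₀ * ε₀ * deriv (deriv fun u => A2 u k s m) t
        = -(μ₀ * J13 t k (s + 1) m)) ∧
      (-d1 (d1 (A3 t)) (k - 1) s m - d2 (d2 (A3 t)) k (s - 1) m
          - d3 (d3 (A3 t)) k s (m - 1)
          + μ₀ * ε₀ * deriv (deriv fun u => A3 u k s m) t
        = μ₀ * J12 t k s (m + 1)) := by
  intro t
  have hE1' (k s m : ℤ) : deriv (fun u ↦ E1 u k s m) t
      = -d1 (fun k s m ↦ deriv (fun u ↦ Φ u k s m) t) k s m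
        - deriv (deriv fun u ↦ A1 u k s m) t := by
    simp only [hE1]
    exact deriv_neg_sub_sub (hΦ _ _ _ t) (hΦ _ _ _ t) (hA1' _ _ _ t)
  have hE2' (k s m : ℤ) : deriv (fun u ↦ E2 u k s m) t
      = -d2 (fun k s m ↦ deriv (fun u ↦ Φ u k s m) t) k s m
        - deriv (deriv fun u ↦ A2 u k s m) t := by
    simp only [hE2]
    exact deriv_neg_sub_sub (hΦ _ _ _ t) (hΦ _ _ _ t) (hA2' _ _ _ t)
  have hE3' (k s m : ℤ) : deriv (fun u ↦ E3 u k s m) t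
      = -d3 (fun k s m ↦ deriv (fun u ↦ Φ u k s m) t) k s m
        - deriv (deriv fun u ↦ A3 u k s m) t := by
    simp only [hE3]
    exact deriv_neg_sub_sub (hΦ _ _ _ t) (hΦ _ _ _ t) (hA3' _ _ _ t)
  simp only [hB12, hB13, hB23] at hB12H hB13H hB23H
  simp only [hD12E, hD13E, hD23E, deriv.fun_neg, deriv_const_mul_field] at hAmp12 hAmp13 hAmp23
  exact wave_equation_stdDir_of_ampere (hB12H t) (hB13H t) (hB23H t) (hAmp12 t) (hAmp13 t)
    (hAmp23 t) hE1' hE2' hE3' (hGauge t)
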